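/- arXiv:2310.07838 — 3 statements merged into one kernel-verified Lean document; each statement's English description precedes it below -/
import Mathlib

section
/- There is a universal constant c > 0 with the following property. Let S and A be nonempty finite sets with |A| ≥ 2, and let n be a positive integer with n ≥ |S||A|/4. For every (possibly randomized) estimator π̂ that maps a dataset D ∈ (S×A)^n to a conditional distribution in Δ(A|S), there exist ρ ∈ Δ(S) and π* ∈ Δ(A|S) such that, when D consists of n i.i.d. samples from ρ×π*, the expected risk satisfies E[ TV(π̂(D) ‖ π* | ρ) ] ≥ c·√(|S||A|/n). -/
open Finset MeasureTheory

/-- `p` is a probability distribution on the finite set `A`. -/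
def IsDist {A : Type} [Fintype A] (p : A → ℝ) : Prop :=
  (∀ a, 0 ≤ p a) ∧ ∑ a, p a = 1

/-- `π` is a conditional probability distribution in `Δ(A|S)`. -/
def IsCondDist {S A : Type} [Fintype A] (π : S → A → ℝ) : Prop :=
  ∀ s, IsDist (π s)

/-- Conditional total variation `TV(π ‖ π' | ρ)`. -/
noncomputable def condTV {S A : Type} [Fintype S] [Fintype A]
    (ρ : S → ℝ) (π π' : S → A → ℝ) : ℝ :=
  ∑ s, ρ s * ((1 / 2) * ∑ a, |π s a - π' s a|)

/-- Probability of the dataset `D` under `n` i.i.d. samples from `ρ × π`. -/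
noncomputable def wt {S A : Type} {n : ℕ} (ρ : S → ℝ) (π : S → A → ℝ) (D : Fin n → S × A) : ℝ :=
  ∏ i, ρ (D i).1 * π (D i).1 (D i).2

/-!
Perturb the uniform labelling: pair up the labels and tilt each pair `{a, a'}` at each input `s`
by `±δ / |A|`, with independent signs, one for each (input, pair). Flipping one sign changes the
law of a single sample by a squared Hellinger distance of order `δ² / (|S||A|)`, which `n`
samples cannot detect when `δ` is of order `√(|S||A| / n)`, while it moves the labelling by order
`δ / |A|` on that pair. Averaging over all signs (Assouad's method), every estimator pays this
price on a constant fraction of the about `|S||A|` labels, hence a risk of order `δ`. Randomization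
does not help, because replacing an estimator by its mean does not increase the expected total
variation.
-/

section Affinity

variable {ι : Type*} [Fintype ι] {p q : ι → ℝ}

/-- The Bhattacharyya coefficient of two weight functions. It is multiplicative over independent
samples, unlike the total variation. -/
noncomputable def bhattacharyya (p q : ι → ℝ) : ℝ :=
  ∑ i, √(p i * q i)

/-- The triangular discrimination (Vincze–Le Cam divergence) of two weight functions, in which
indices with `p i + q i = 0` contribute `0`. -/
noncomputable def triangularDiscrimination (p q : ι → ℝ) : ℝ :=
  ∑ i, (p i - q i) ^ 2 / (p i + q i)

lemma bhattacharyya_nonneg : 0 ≤ bhattacharyya p q :=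
  sum_nonneg fun _ _ => Real.sqrt_nonneg _

-- Cauchy–Schwarz applied to `√(p q) = √(min p q) √(max p q)`.
lemma sq_bhattacharyya_le (hp : ∀ i, 0 ≤ p i) (hq : ∀ i, 0 ≤ q i) :
    bhattacharyya p q ^ 2 ≤ (∑ i, min (p i) (q i)) * ∑ i, (p i + q i) := by
  have hmin i : 0 ≤ min (p i) (q i) := le_min (hp i) (hq i)
  have hmax i : 0 ≤ max (p i) (q i) := le_max_of_le_left (hp i)
  calc bhattacharyya p q ^ 2
      = (∑ i, √(min (p i) (q i)) * √(max (p i) (q i))) ^ 2 := by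
        simp only [bhattacharyya, ← Real.sqrt_mul (hmin _), min_mul_max]
    _ ≤ (∑ i, √(min (p i) (q i)) ^ 2) * ∑ i, √(max (p i) (q i)) ^ 2 :=
        sum_mul_sq_le_sq_mul_sq _ _ _
    _ = (∑ i, min (p i) (q i)) * ∑ i, max (p i) (q i) := by
        simp only [Real.sq_sqrt (hmin _), Real.sq_sqrt (hmax _)]
    _ ≤ (∑ i, min (p i) (q i)) * ∑ i, (p i + q i) := by
        gcongr with i
        · exact sum_nonneg fun i _ => hmin i
        · exact max_le_add_of_nonneg (hp i) (hq i)

lemma add_half_sub_div_le_sqrt_mul {x y : ℝ} (hx : 0 ≤ x) (hy : 0 ≤ y) :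
    (x + y) / 2 - (x - y) ^ 2 / (x + y) / 2 ≤ √(x * y) := by
  rcases (add_nonneg hx hy).eq_or_lt with hxy | hxy
  · simp [← hxy]
  · have hgm : 2 * √(x * y) ≤ x + y := by
      have := two_mul_le_add_sq (√x) (√y)
      rwa [Real.sq_sqrt hx, Real.sq_sqrt hy, mul_assoc, ← Real.sqrt_mul hx] at this
    have hharm : (x + y) / 2 - (x - y) ^ 2 / (x + y) / 2 = 2 * √(x * y) ^ 2 / (x + y) := by
      rw [Real.sq_sqrt (mul_nonneg hx hy)]
      field_simp
      ring
    rw [hharm, div_le_iff₀ hxy]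
    nlinarith [Real.sqrt_nonneg (x * y)]

lemma sub_triangularDiscrimination_le_bhattacharyya (hp : ∀ i, 0 ≤ p i) (hq : ∀ i, 0 ≤ q i) :
    (∑ i, p i + ∑ i, q i) / 2 - triangularDiscrimination p q / 2 ≤ bhattacharyya p q := by
  simp only [triangularDiscrimination, ← sum_add_distrib, sum_div, ← sum_sub_distrib]
  exact sum_le_sum fun i _ => add_half_sub_div_le_sqrt_mul (hp i) (hq i)

lemma bhattacharyya_iid (n : ℕ) (hp : ∀ i, 0 ≤ p i) (hq : ∀ i, 0 ≤ q i) :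
    bhattacharyya (fun x : Fin n → ι => ∏ k, p (x k)) (fun x => ∏ k, q (x k)) =
      bhattacharyya p q ^ n := by
  simp only [bhattacharyya, Fintype.sum_pow, ← prod_mul_distrib]
  exact sum_congr rfl fun x _ => Real.sqrt_prod _ fun k _ => mul_nonneg (hp _) (hq _)

end Affinity

section Distributions

variable {S A : Type} [Fintype A]

lemma IsDist.iid {p : A → ℝ} (hp : IsDist p) (n : ℕ) :
    IsDist fun x : Fin n → A => ∏ k, p (x k) :=
  ⟨fun _ => prod_nonneg fun _ _ => hp.1 _, by rw [← Fintype.sum_pow, hp.2, one_pow]⟩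

lemma IsDist.le_one {p : A → ℝ} (hp : IsDist p) (a : A) : p a ≤ 1 :=
  hp.2 ▸ single_le_sum (fun b _ => hp.1 b) (mem_univ a)

lemma IsDist.sub_triangularDiscrimination_le_sum_min_iid {p q : A → ℝ} (hp : IsDist p)
    (hq : IsDist q) (n : ℕ) :
    (1 - n * triangularDiscrimination p q) / 2 ≤
      ∑ x : Fin n → A, min (∏ k, p (x k)) (∏ k, q (x k)) := by
  have hone : 1 - triangularDiscrimination p q / 2 ≤ bhattacharyya p q := by
    simpa [hp.2, hq.2] using sub_triangularDiscrimination_le_bhattacharyya hp.1 hq.1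
  have hbernoulli := one_add_mul_le_pow (a := bhattacharyya p q - 1)
    (by linarith [bhattacharyya_nonneg (p := p) (q := q)]) (n * 2)
  have hmin := sq_bhattacharyya_le (hp.iid n).1 (hq.iid n).1
  rw [bhattacharyya_iid n hp.1 hq.1, sum_add_distrib, (hp.iid n).2, (hq.iid n).2,
    ← pow_mul] at hmin
  rw [add_sub_cancel] at hbernoulli
  push_cast at hbernoulli
  nlinarith [mul_le_mul_of_nonneg_left hone n.cast_nonneg]

lemma IsCondDist.integrable {Ω : Type*} [MeasurableSpace Ω] {μ : Measure Ω} [IsFiniteMeasure μ]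
    {π : Ω → S → A → ℝ} (hmeas : Measurable π) (hπ : ∀ ω, IsCondDist (π ω)) (s : S) (a : A) :
    Integrable (fun ω => π ω s a) μ := by
  have hsa : Measurable fun ω => π ω s a := by fun_prop
  refine .of_bound hsa.aestronglyMeasurable 1 (.of_forall fun ω => ?_)
  rw [Real.norm_of_nonneg ((hπ ω s).1 a)]
  exact (hπ ω s).le_one a

variable [Fintype S]

/-- The joint distribution `ρ × π` of an input and its label. -/
def jointDist (ρ : S → ℝ) (π : S → A → ℝ) (z : S × A) : ℝ :=
  ρ z.1 * π z.1 z.2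

/-- The uniform distribution on `S`. -/
noncomputable def unifDist (S : Type) [Fintype S] (_ : S) : ℝ :=
  (Fintype.card S : ℝ)⁻¹

lemma isDist_unifDist [Nonempty S] : IsDist (unifDist S) :=
  ⟨fun _ => by unfold unifDist; positivity, by simp [unifDist]⟩

lemma IsDist.joint {ρ : S → ℝ} {π : S → A → ℝ} (hρ : IsDist ρ) (hπ : IsCondDist π) :
    IsDist (jointDist ρ π) := by
  refine ⟨fun z => mul_nonneg (hρ.1 _) ((hπ _).1 _), ?_⟩
  simp only [jointDist, Fintype.sum_prod_type, ← mul_sum, (hπ _).2, mul_one, hρ.2]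

lemma wt_nonneg {ρ : S → ℝ} {π : S → A → ℝ} (hρ : IsDist ρ) (hπ : IsCondDist π) {n : ℕ}
    (D : Fin n → S × A) : 0 ≤ wt ρ π D :=
  ((hρ.joint hπ).iid n).1 D

lemma condTV_integral_le {Ω : Type*} [MeasurableSpace Ω] {μ : Measure Ω} [IsProbabilityMeasure μ]
    {ρ : S → ℝ} (hρ : ∀ s, 0 ≤ ρ s) {π : Ω → S → A → ℝ}
    (hπ : ∀ s a, Integrable (fun ω => π ω s a) μ) (π' : S → A → ℝ) :
    condTV ρ (fun s a => ∫ ω, π ω s a ∂μ) π' ≤ ∫ ω, condTV ρ (π ω) π' ∂μ := by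
  have hdiff s a : Integrable (fun ω => |π ω s a - π' s a|) μ :=
    ((hπ s a).sub (integrable_const _)).abs
  have hsum s : Integrable (fun ω => ∑ a, |π ω s a - π' s a|) μ :=
    integrable_finsetSum _ fun a _ => hdiff s a
  have hjensen s a : |(∫ ω, π ω s a ∂μ) - π' s a| ≤ ∫ ω, |π ω s a - π' s a| ∂μ := by
    simpa [integral_sub (hπ s a)] using
      abs_integral_le_integral_abs (μ := μ) (f := fun ω => π ω s a - π' s a)
  have hswap : ∫ ω, condTV ρ (π ω) π' ∂μ =
      ∑ s, ρ s * ((1 / 2) * ∑ a, ∫ ω, |π ω s a - π' s a| ∂μ) := by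
    unfold condTV
    rw [integral_finsetSum _ fun s _ => ((hsum s).const_mul _).const_mul _]
    simp only [integral_const_mul, integral_finsetSum _ fun a _ => hdiff _ a]
  rw [hswap]
  unfold condTV
  gcongr with s _ a
  · exact hρ s
  · exact hjensen s a

end Distributions

section Assouad

variable {D : Type*} [Fintype D]

lemma mul_sum_min_le_sum_mul_add_sum_mul {p q f g : D → ℝ} {η : ℝ} (hp : ∀ d, 0 ≤ p d)
    (hq : ∀ d, 0 ≤ q d) (hf : ∀ d, 0 ≤ f d) (hg : ∀ d, 0 ≤ g d) (hsep : ∀ d, η ≤ f d + g d) :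
    (∑ d, min (p d) (q d)) * η ≤ ∑ d, p d * f d + ∑ d, q d * g d := by
  rw [sum_mul, ← sum_add_distrib]
  refine sum_le_sum fun d _ => ?_
  calc min (p d) (q d) * η ≤ min (p d) (q d) * (f d + g d) :=
        mul_le_mul_of_nonneg_left (hsep d) (le_min (hp d) (hq d))
    _ = min (p d) (q d) * f d + min (p d) (q d) * g d := mul_add _ _ _
    _ ≤ p d * f d + q d * g d := by
        gcongr
        · exact hf d
        · exact min_le_left _ _
        · exact hg d
        · exact min_le_right _ _

/- Assouad's lemma, with the coordinate flips of the hypercube replaced by arbitrary permutations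
`flip i` of the parameters: the proof only uses that they preserve sums over `Θ`. -/
theorem assouad {Θ I : Type*} [Finite Θ] [Nonempty Θ] [Fintype I] {P : Θ → D → ℝ}
    {loss : I → Θ → D → ℝ} {α η : ℝ} (flip : I → Equiv.Perm Θ) (hη : 0 ≤ η)
    (hP : ∀ θ d, 0 ≤ P θ d) (hloss : ∀ i θ d, 0 ≤ loss i θ d)
    (hsep : ∀ i θ d, η ≤ loss i θ d + loss i (flip i θ) d)
    (haff : ∀ i θ, α ≤ ∑ d, min (P θ d) (P (flip i θ) d)) :
    ∃ θ, Fintype.card I * (α * η / 2) ≤ ∑ d, P θ d * ∑ i, loss i θ d := by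
  have := Fintype.ofFinite Θ
  let risk i θ := ∑ d, P θ d * loss i θ d
  have htwo i θ : α * η ≤ risk i θ + risk i (flip i θ) :=
    (mul_le_mul_of_nonneg_right (haff i θ) hη).trans <|
      mul_sum_min_le_sum_mul_add_sum_mul (hP _) (hP _) (hloss i _) (hloss i _) (hsep i θ)
  have hcoord i : ∑ _θ : Θ, α * η / 2 ≤ ∑ θ, risk i θ := by
    have hsum := sum_le_sum fun θ (_ : θ ∈ univ) => htwo i θ
    rw [sum_add_distrib, Equiv.sum_comp (flip i) (risk i)] at hsum
    rw [← sum_div]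
    linarith
  have hrisk θ : ∑ d, P θ d * ∑ i, loss i θ d = ∑ i, risk i θ := by
    simp only [mul_sum, risk]
    exact sum_comm
  have htotal : ∑ _θ : Θ, Fintype.card I * (α * η / 2) ≤ ∑ θ, ∑ i, risk i θ := by
    rw [sum_comm (f := fun θ i => risk i θ)]
    calc ∑ _θ : Θ, Fintype.card I * (α * η / 2) = ∑ _i : I, ∑ _θ : Θ, α * η / 2 := by
          simp only [sum_const, card_univ, nsmul_eq_mul]
          ring
      _ ≤ ∑ i, ∑ θ, risk i θ := sum_le_sum fun i _ => hcoord i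
  obtain ⟨θ, -, hθ⟩ := exists_le_of_sum_le univ_nonempty htotal
  exact ⟨θ, hθ.trans_eq (hrisk θ).symm⟩

end Assouad

section PairSign

/-- Negation of the `i`-th coordinate, as a permutation of the sign vectors. -/
def signFlip {I : Type*} [DecidableEq I] (i : I) : Equiv.Perm (I → ℤˣ) :=
  Equiv.mulLeft (Pi.mulSingle i (-1))

lemma signFlip_self {I : Type*} [DecidableEq I] (i : I) (θ : I → ℤˣ) :
    signFlip i θ i = -θ i := by
  simp [signFlip]

lemma signFlip_of_ne {I : Type*} [DecidableEq I] {i k : I} (h : k ≠ i) (θ : I → ℤˣ) :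
    signFlip i θ k = θ k := by
  simp [signFlip, h]

lemma sum_units_int_cast : ∑ b : ℤˣ, ((b : ℤ) : ℝ) = 0 := by
  simp [UnitsInt.univ]

lemma units_int_cast_sq (u : ℤˣ) : ((u : ℤ) : ℝ) ^ 2 = 1 := by
  rcases Int.units_eq_one_or u with rfl | rfl <;> simp

lemma abs_units_int_cast (u : ℤˣ) : |((u : ℤ) : ℝ)| = 1 := by
  rcases Int.units_eq_one_or u with rfl | rfl <;> simp

variable {A J : Type*} (e : J × ℤˣ ↪ A)

/-- The direction in which the labels are tilted: `e` singles out disjoint pairs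
`{e (j, 1), e (j, -1)}` of labels, and the two labels of the `j`-th pair receive the values `ε j`
and `-ε j`. Unpaired labels receive `0`. -/
noncomputable def pairSign (ε : J → ℤˣ) : A → ℝ :=
  Function.extend e (fun x => (((ε x.1 * x.2 : ℤˣ) : ℤ) : ℝ)) 0

lemma pairSign_apply (ε : J → ℤˣ) (j : J) (b : ℤˣ) :
    pairSign e ε (e (j, b)) = ((ε j * b : ℤˣ) : ℤ) :=
  e.injective.extend_apply _ _ _

lemma pairSign_of_notMem_range (ε : J → ℤˣ) {a : A} (ha : a ∉ Set.range e) :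
    pairSign e ε a = 0 :=
  Function.extend_apply' _ _ _ ha

lemma abs_pairSign_le_one (ε : J → ℤˣ) (a : A) : |pairSign e ε a| ≤ 1 := by
  by_cases ha : a ∈ Set.range e
  · obtain ⟨⟨j, b⟩, rfl⟩ := ha
    rw [pairSign_apply, abs_units_int_cast]
  · simp [pairSign_of_notMem_range e ε ha]

lemma sum_pairSign [Fintype A] (ε : J → ℤˣ) : ∑ a, pairSign e ε a = 0 := by
  have : Finite (J × ℤˣ) := .of_injective e e.injective
  have : Finite J := .prod_left ℤˣ
  have := Fintype.ofFinite J
  rw [← Fintype.sum_of_injective e e.injective _ _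
    (fun _ ha => pairSign_of_notMem_range e ε ha) (fun x => (pairSign_apply e ε x.1 x.2).symm),
    Fintype.sum_prod_type]
  simp only [Units.val_mul, Int.cast_mul, ← mul_sum, sum_units_int_cast, mul_zero, sum_const_zero]

end PairSign

section SignPolicy

variable {S A : Type} {J : Type*} (e : J × ℤˣ ↪ A)

/-- The `ℓ¹`-error of `π` against `π'` on the `i.2`-th pair of labels at the input `i.1`. -/
def pairError (π π' : S → A → ℝ) (i : S × J) : ℝ :=
  ∑ b, |π i.1 (e (i.2, b)) - π' i.1 (e (i.2, b))|

lemma pairError_nonneg (π π' : S → A → ℝ) (i : S × J) : 0 ≤ pairError e π π' i :=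
  sum_nonneg fun _ _ => abs_nonneg _

variable [Fintype A]

/-- The hard instances: the uniform labelling tilted at each input `s` by `δ`, with the sign
`θ (s, j)` on the `j`-th pair of labels. -/
noncomputable def signPolicy (δ : ℝ) (θ : S × J → ℤˣ) (s : S) (a : A) : ℝ :=
  (1 + δ * pairSign e (fun j => θ (s, j)) a) / Fintype.card A

lemma isCondDist_signPolicy [Nonempty A] {δ : ℝ} (hδ : |δ| ≤ 1) (θ : S × J → ℤˣ) :
    IsCondDist (signPolicy e δ θ) := by
  refine fun s => ⟨fun a => ?_, ?_⟩
  · have htilt : |δ * pairSign e (fun j => θ (s, j)) a| ≤ 1 := by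
      rw [abs_mul]
      exact mul_le_one₀ hδ (abs_nonneg _) (abs_pairSign_le_one e _ a)
    have := (abs_le.1 htilt).1
    exact div_nonneg (by linarith) (Nat.cast_nonneg _)
  · simp [signPolicy, ← sum_div, sum_add_distrib, ← mul_sum, sum_pairSign]

lemma signPolicy_apply (δ : ℝ) (θ : S × J → ℤˣ) (s : S) (j : J) (b : ℤˣ) :
    signPolicy e δ θ s (e (j, b)) = (1 + δ * ((θ (s, j) * b : ℤˣ) : ℤ)) / Fintype.card A := by
  rw [signPolicy, pairSign_apply]

lemma sum_pairError_le_condTV_unifDist [Fintype S] [Fintype J] (π π' : S → A → ℝ) :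
    (2 * Fintype.card S : ℝ)⁻¹ * ∑ i : S × J, pairError e π π' i ≤ condTV (unifDist S) π π' := by
  have hpairs s : ∑ j, pairError e π π' (s, j) ≤ ∑ a, |π s a - π' s a| := by
    simp only [pairError]
    rw [← Fintype.sum_prod_type', ← sum_map univ e fun a => |π s a - π' s a|]
    exact sum_le_univ_sum_of_nonneg fun _ => abs_nonneg _
  calc (2 * Fintype.card S : ℝ)⁻¹ * ∑ i : S × J, pairError e π π' i
      = (2 * Fintype.card S : ℝ)⁻¹ * ∑ s, ∑ j, pairError e π π' (s, j) := by
        rw [Fintype.sum_prod_type]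
    _ ≤ (2 * Fintype.card S : ℝ)⁻¹ * ∑ s, ∑ a, |π s a - π' s a| := by
        gcongr with s
        exact hpairs s
    _ = condTV (unifDist S) π π' := by
        simp only [condTV, unifDist, ← mul_sum]
        ring

section SignFlip

variable [DecidableEq S] [DecidableEq J]

lemma signPolicy_signFlip_apply (δ : ℝ) (θ : S × J → ℤˣ) (s : S) (j : J) (b : ℤˣ) :
    signPolicy e δ (signFlip (s, j) θ) s (e (j, b)) =
      (1 - δ * ((θ (s, j) * b : ℤˣ) : ℤ)) / Fintype.card A := by
  rw [signPolicy_apply, signFlip_self]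
  simp [sub_eq_add_neg]

lemma signPolicy_signFlip_of_forall_ne (δ : ℝ) (θ : S × J → ℤˣ) {s s' : S} {j : J} {a : A}
    (h : ∀ b, (s, e (j, b)) ≠ (s', a)) :
    signPolicy e δ (signFlip (s, j) θ) s' a = signPolicy e δ θ s' a := by
  by_cases ha : a ∈ Set.range e
  · obtain ⟨⟨k, b⟩, rfl⟩ := ha
    have hne : (s', k) ≠ (s, j) := by
      rintro ⟨⟩
      exact h b rfl
    rw [signPolicy_apply, signPolicy_apply, signFlip_of_ne hne]
  · simp only [signPolicy, pairSign_of_notMem_range e _ ha]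

lemma abs_signPolicy_sub_signFlip (δ : ℝ) (θ : S × J → ℤˣ) (s : S) (j : J) (b : ℤˣ) :
    |signPolicy e δ θ s (e (j, b)) - signPolicy e δ (signFlip (s, j) θ) s (e (j, b))| =
      2 * |δ| / Fintype.card A := by
  rw [signPolicy_apply, signPolicy_signFlip_apply, ← sub_div, add_sub_sub_cancel, ← two_mul,
    abs_div, abs_mul, abs_mul, abs_units_int_cast, Nat.abs_cast, mul_one, abs_two]

lemma le_pairError_add_pairError_signFlip (δ : ℝ) (θ : S × J → ℤˣ) (π : S → A → ℝ) (i : S × J) :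
    4 * |δ| / Fintype.card A ≤
      pairError e π (signPolicy e δ θ) i + pairError e π (signPolicy e δ (signFlip i θ)) i := by
  calc 4 * |δ| / Fintype.card A = ∑ _b : ℤˣ, 2 * |δ| / Fintype.card A := by
        simp only [sum_const, card_univ, Fintype.card_units_int, nsmul_eq_mul]
        push_cast
        ring
    _ ≤ pairError e π (signPolicy e δ θ) i + pairError e π (signPolicy e δ (signFlip i θ)) i := by
        simp only [pairError, ← sum_add_distrib]
        refine sum_le_sum fun b _ => ?_
        rw [← abs_signPolicy_sub_signFlip e δ θ i.1 i.2 b, abs_sub_comm (π _ _)]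
        exact abs_sub_le _ _ _

lemma triangularDiscrimination_signPolicy_signFlip [Fintype S] [Nonempty S] [Nonempty A] (δ : ℝ)
    (θ : S × J → ℤˣ) (i : S × J) :
    triangularDiscrimination (jointDist (unifDist S) (signPolicy e δ θ))
        (jointDist (unifDist S) (signPolicy e δ (signFlip i θ))) =
      4 * δ ^ 2 / (Fintype.card S * Fintype.card A) := by
  obtain ⟨s, j⟩ := i
  have hinj : Function.Injective fun b : ℤˣ => (s, e (j, b)) := fun b b' h => by simpa using h
  unfold triangularDiscrimination
  rw [← Fintype.sum_of_injective _ hinj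
    (fun _ => 2 * δ ^ 2 / (Fintype.card S * Fintype.card A : ℝ))]
  · simp only [sum_const, card_univ, Fintype.card_units_int, nsmul_eq_mul]
    push_cast
    ring
  · rintro ⟨s', a⟩ ha
    simp [jointDist, signPolicy_signFlip_of_forall_ne e δ θ fun b hb => ha ⟨b, hb⟩]
  · intro b
    simp only [jointDist, unifDist]
    rw [signPolicy_signFlip_apply, signPolicy_apply]
    field_simp
    ring_nf
    rw [units_int_cast_sq]
    ring

lemma le_sum_min_wt_signPolicy_signFlip [Fintype S] [Nonempty S] [Nonempty A] {δ : ℝ}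
    (hδ : |δ| ≤ 1) (n : ℕ) (θ : S × J → ℤˣ) (i : S × J) :
    (1 - n * (4 * δ ^ 2 / (Fintype.card S * Fintype.card A))) / 2 ≤
      ∑ D : Fin n → S × A, min (wt (unifDist S) (signPolicy e δ θ) D)
        (wt (unifDist S) (signPolicy e δ (signFlip i θ)) D) := by
  rw [← triangularDiscrimination_signPolicy_signFlip e δ θ i]
  exact (isDist_unifDist.joint
    (isCondDist_signPolicy e hδ _)).sub_triangularDiscrimination_le_sum_min_iid
      (isDist_unifDist.joint (isCondDist_signPolicy e hδ _)) n

end SignFlip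

theorem exists_signPolicy_le_risk [Fintype S] [Nonempty S] [Fintype J] [Nonempty A] {δ : ℝ}
    (hδ : |δ| ≤ 1) {n : ℕ} (est : (Fin n → S × A) → S → A → ℝ) :
    ∃ θ : S × J → ℤˣ,
      Fintype.card J / Fintype.card A * |δ| *
          ((1 - n * (4 * δ ^ 2 / (Fintype.card S * Fintype.card A))) / 2) ≤
        ∑ D, wt (unifDist S) (signPolicy e δ θ) D *
          condTV (unifDist S) (est D) (signPolicy e δ θ) := by
  classical
  have hwt (θ : S × J → ℤˣ) (D : Fin n → S × A) : 0 ≤ wt (unifDist S) (signPolicy e δ θ) D :=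
    wt_nonneg isDist_unifDist (isCondDist_signPolicy e hδ θ) D
  obtain ⟨θ, hθ⟩ := assouad signFlip (by positivity) hwt
    (fun i θ D => pairError_nonneg e (est D) (signPolicy e δ θ) i)
    (fun i θ D => le_pairError_add_pairError_signFlip e δ θ (est D) i)
    (fun i θ => le_sum_min_wt_signPolicy_signFlip e hδ n θ i)
  refine ⟨θ, ?_⟩
  calc _ = (2 * Fintype.card S : ℝ)⁻¹ * (Fintype.card (S × J) *
          ((1 - n * (4 * δ ^ 2 / (Fintype.card S * Fintype.card A))) / 2 *
            (4 * |δ| / Fintype.card A) / 2)) := by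
        rw [Fintype.card_prod]
        push_cast
        field_simp
        ring
    _ ≤ (2 * Fintype.card S : ℝ)⁻¹ * ∑ D, wt (unifDist S) (signPolicy e δ θ) D *
          ∑ i : S × J, pairError e (est D) (signPolicy e δ θ) i := by gcongr
    _ ≤ ∑ D, wt (unifDist S) (signPolicy e δ θ) D *
          condTV (unifDist S) (est D) (signPolicy e δ θ) := by
        rw [mul_sum]
        refine sum_le_sum fun D _ => ?_
        rw [mul_left_comm]
        exact mul_le_mul_of_nonneg_left (sum_pairError_le_condTV_unifDist e _ _) (hwt θ D)

end SignPolicy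

lemma one_third_le_half_div {a : ℕ} (ha : 2 ≤ a) : (1 / 3 : ℝ) ≤ (a / 2 : ℕ) / a := by
  have hhalf : a ≤ a / 2 * 3 := by omega
  rw [div_le_div_iff₀ (by norm_num) (by positivity), one_mul]
  exact_mod_cast hhalf

section LowerBound

variable {S A : Type} [Fintype S] [Fintype A] [Nonempty S]

lemma exists_sqrt_card_div_le_risk (hA : 2 ≤ Fintype.card A) {n : ℕ}
    (hn : (Fintype.card S * Fintype.card A : ℝ) / 4 ≤ n) (est : (Fin n → S × A) → S → A → ℝ) :
    ∃ π : S → A → ℝ, IsCondDist π ∧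
      1 / 32 * √((Fintype.card S * Fintype.card A : ℝ) / n) ≤
        ∑ D, wt (unifDist S) π D * condTV (unifDist S) (est D) π := by
  have : Nonempty A := Fintype.card_pos_iff.1 (by omega)
  obtain ⟨e⟩ : Nonempty (Fin (Fintype.card A / 2) × ℤˣ ↪ A) :=
    Function.Embedding.nonempty_of_card_le <| by
      simpa [Fintype.card_units_int] using Nat.div_mul_le_self _ 2
  set N : ℝ := Fintype.card S * Fintype.card A
  have hN : 0 < N := by positivity
  have hn₀ : (0 : ℝ) < n := by linarith
  set δ := √(N / n) / 4 with hδ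
  have habs : |δ| = δ := abs_of_nonneg (by positivity)
  have hsq : δ ^ 2 = N / n / 16 := by
    rw [hδ, div_pow, Real.sq_sqrt (by positivity)]
    norm_num
  have hle : |δ| ≤ 1 := by
    have hratio : N / n ≤ 4 := by rw [div_le_iff₀ hn₀]; linarith
    rw [← sq_le_one_iff_abs_le_one]
    linarith
  have hdiscr : n * (4 * δ ^ 2 / N) = 1 / 4 := by
    rw [hsq]
    field_simp
    norm_num
  obtain ⟨θ, hθ⟩ := exists_signPolicy_le_risk e hle est
  refine ⟨_, isCondDist_signPolicy e hle θ, le_trans ?_ hθ⟩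
  rw [habs, hdiscr, Fintype.card_fin]
  calc 1 / 32 * √(N / n) = 1 / 3 * δ * ((1 - 1 / 4) / 2) := by rw [hδ]; ring
    _ ≤ (Fintype.card A / 2 : ℕ) / Fintype.card A * δ * ((1 - 1 / 4) / 2) := by
        gcongr ?_ * δ * ((1 - 1 / 4) / 2)
        exact one_third_le_half_div hA

theorem stmt_0_general (hA : 2 ≤ Fintype.card A) {n : ℕ}
    (hn : (Fintype.card S * Fintype.card A : ℝ) / 4 ≤ n) {Ω : Type*} [MeasurableSpace Ω]
    (μ : Measure Ω) [IsProbabilityMeasure μ] (est : (Fin n → S × A) → Ω → S → A → ℝ)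
    (hest : ∀ D s a, Integrable (fun ω => est D ω s a) μ) :
    ∃ π : S → A → ℝ, IsCondDist π ∧
      1 / 32 * √((Fintype.card S * Fintype.card A : ℝ) / n) ≤
        ∑ D, wt (unifDist S) π D * ∫ ω, condTV (unifDist S) (est D ω) π ∂μ := by
  obtain ⟨π, hπ, hrisk⟩ := exists_sqrt_card_div_le_risk hA hn fun D s a => ∫ ω, est D ω s a ∂μ
  exact ⟨π, hπ, hrisk.trans <| sum_le_sum fun D _ => mul_le_mul_of_nonneg_left
    (condTV_integral_le isDist_unifDist.1 (hest D) π) (wt_nonneg isDist_unifDist hπ D)⟩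

end LowerBound

/-- minimax lower bound `c·√(|S||A|/n)` for transfer via hard labels,
for every (possibly randomized) estimator. -/
theorem stmt_0 :
    ∃ c : ℝ, 0 < c ∧
      ∀ (S A : Type) [Fintype S] [Fintype A] [Nonempty S],
        2 ≤ Fintype.card A →
        ∀ n : ℕ, 0 < n →
          (Fintype.card S * Fintype.card A : ℝ) / 4 ≤ n →
          ∀ (Ω : Type) [MeasurableSpace Ω] (μ : Measure Ω) [IsProbabilityMeasure μ]
            (est : (Fin n → S × A) → Ω → S → A → ℝ),
            (∀ D, Measurable (est D)) →
            (∀ D ω, IsCondDist (est D ω)) →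
            ∃ ρ : S → ℝ, ∃ πs : S → A → ℝ,
              IsDist ρ ∧ IsCondDist πs ∧
              c * Real.sqrt ((Fintype.card S * Fintype.card A : ℝ) / n) ≤
                ∑ D : Fin n → S × A, wt ρ πs D * ∫ ω, condTV ρ (est D ω) πs ∂μ := by
  refine ⟨1 / 32, by norm_num, fun S A _ _ _ hA n _ hn Ω _ μ _ est hmeas hdist => ?_⟩
  obtain ⟨π, hπ, hrisk⟩ := stmt_0_general hA hn μ est fun D =>
    IsCondDist.integrable (hmeas D) (hdist D)
  exact ⟨unifDist S, π, isDist_unifDist, hπ, hrisk⟩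
end

section
/- Let S and A be nonempty finite sets, ρ ∈ Δ(S), π* ∈ Δ(A|S), and let D be n i.i.d. samples from ρ×π*. Let π̂_MLE ∈ Δ(A|S) be any conditional distribution with π̂_MLE(a|s) = N((s,a),D)/N(s,D) whenever N(s,D) > 0. Then for every δ ∈ (0,1), with probability at least 1 − δ, TV(π̂_MLE ‖ π* | ρ) ≤ √( |S|·(|A|·log 2 + log((|S|+1)/δ)) / (2n) ) + √( 2·(|S|·log 2 + log((|S|+1)/δ)) / n ). -/
open Finset

/-- `N((s,a), D)`: number of occurrences of the pair `(s,a)` in the dataset `D`. -/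
def cntSA {S A : Type} [DecidableEq S] [DecidableEq A] {n : ℕ}
    (D : Fin n → S × A) (s : S) (a : A) : ℕ :=
  (univ.filter fun i => D i = (s, a)).card

/-- `N(s, D)`: number of occurrences of the input `s` in the dataset `D`. -/
def cntS {S A : Type} [DecidableEq S] {n : ℕ} (D : Fin n → S × A) (s : S) : ℕ :=
  (univ.filter fun i => (D i).1 = s).card

open scoped Classical

/-!
Writing the conditional total variation through positive parts, `n · TV` is at most
`∑ s, N(s) · ∑ a, (π̂(a|s) - π(a|s))⁺ + ∑ s, (n ρ(s) - N(s))⁺`, since each inner sum lies in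
`[0, 1]`. With `B = {π < π̂}` and `C = {N < n ρ}`, the identity `N(s) π̂(a|s) = N(s, a)` turns
the two terms into the sums over the sample of `1_B(sᵢ, aᵢ) - π(B|sᵢ)` and of `ρ(C) - 1_C(sᵢ)`.
For a fixed `B` or `C` these summands are i.i.d. and, by Hoeffding's lemma (applied conditionally
on `sᵢ` for `B`), sub-Gaussian with variance proxy `1/4`; a union bound over the `2^(|S||A|)` sets
`B` and the `2^|S|` sets `C` finishes the proof. The confidence is split as `δ/2 + δ/2`, and
`|S| + 1 ≥ 2` gives the stated constants.
-/

open MeasureTheory ProbabilityTheory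
open scoped NNReal

section Rates

lemma div_two_mul_sq_half_nnnorm_sub (x a b : ℝ) :
    x / (2 * ((‖b - a‖₊ / 2) ^ 2 : ℝ≥0)) = 2 * x / (b - a) ^ 2 := by
  push_cast
  rw [Real.norm_eq_abs, div_pow, sq_abs]
  field_simp

lemma mul_exp_neg_le_of_log_div_le {N η x : ℝ} (hN : 0 < N) (hη : 0 < η)
    (h : Real.log (N / η) ≤ x) : N * Real.exp (-x) ≤ η := by
  rw [Real.exp_neg, ← div_eq_mul_inv, div_le_iff₀ (Real.exp_pos x), mul_comm, ← div_le_iff₀ hη]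
  exact (Real.log_le_iff_le_exp (by positivity)).1 h

lemma log_two_pow_div_half_le {δ r : ℝ} (m : ℕ) (hδ : 0 < δ) (hr : 1 ≤ r) :
    Real.log (2 ^ m / (δ / 2)) ≤ m * Real.log 2 + Real.log ((r + 1) / δ) := calc
  Real.log (2 ^ m / (δ / 2)) = Real.log (2 ^ m * (2 / δ)) := by congr 1; field_simp
  _ = m * Real.log 2 + Real.log (2 / δ) := by
    rw [Real.log_mul (by positivity) (by positivity), Real.log_pow]
  _ ≤ m * Real.log 2 + Real.log ((r + 1) / δ) := by gcongr; linarith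

end Rates

section IIDDeviation

variable {ι β Ω : Type*} [Fintype ι] [MeasurableSpace Ω] {μ : Measure Ω} [IsProbabilityMeasure μ]
  {c : ℝ≥0} {ε : ℝ}

lemma measureReal_pi_card_mul_le_sum_le {X : Ω → ℝ} (hX : HasSubgaussianMGF X c μ) (hε : 0 ≤ ε) :
    (Measure.pi fun _ : ι => μ).real {ω | Fintype.card ι * ε ≤ ∑ i, X (ω i)} ≤
      Real.exp (-(Fintype.card ι * ε ^ 2 / (2 * c))) := by
  have hindep : iIndepFun (fun i (ω : ι → Ω) => X (ω i)) (Measure.pi fun _ => μ) :=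
    iIndepFun_pi fun _ => hX.aemeasurable
  have hcoord (i : ι) :
      HasSubgaussianMGF (fun ω : ι → Ω => X (ω i)) c (Measure.pi fun _ => μ) := by
    have hmap := measurePreserving_eval (fun _ : ι => μ) i
    exact HasSubgaussianMGF.of_map hmap.measurable.aemeasurable (hmap.map_eq.symm ▸ hX)
  refine (HasSubgaussianMGF.measure_sum_ge_le_of_iIndepFun hindep (fun i _ => hcoord i)
    (by positivity)).trans_eq ?_
  congr 1
  rcases isEmpty_or_nonempty ι with _ | _
  · simp
  · simp only [sum_const, card_univ, nsmul_eq_mul, NNReal.coe_mul, NNReal.coe_natCast]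
    field_simp

lemma measureReal_pi_exists_card_mul_le_sum_le [Fintype β] {X : β → Ω → ℝ}
    (hX : ∀ b, HasSubgaussianMGF (X b) c μ) (hε : 0 ≤ ε) :
    (Measure.pi fun _ : ι => μ).real {ω | ∃ b, Fintype.card ι * ε ≤ ∑ i, X b (ω i)} ≤
      Fintype.card β * Real.exp (-(Fintype.card ι * ε ^ 2 / (2 * c))) := by
  rw [Set.ofPred_exists]
  refine (measureReal_iUnion_fintype_le _).trans ?_
  refine (sum_le_card_nsmul _ _ _ fun b _ =>
    measureReal_pi_card_mul_le_sum_le (hX b) hε).trans_eq ?_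
  rw [card_univ, nsmul_eq_mul]

end IIDDeviation

namespace IsDist

variable {A : Type} [Fintype A] {p : A → ℝ}

/-- The probability measure on a finite space with point masses `p`. -/
noncomputable def toMeasure [MeasurableSpace A] (hp : IsDist p) : Measure A :=
  (PMF.ofFintype (fun a => ENNReal.ofReal (p a)) (by
    rw [← ENNReal.ofReal_sum_of_nonneg fun a _ => hp.1 a, hp.2, ENNReal.ofReal_one])).toMeasure

section Measure

variable [MeasurableSpace A] (hp : IsDist p)

instance : IsProbabilityMeasure hp.toMeasure := by
  unfold toMeasure
  infer_instance

variable [MeasurableSingletonClass A]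

lemma toMeasure_real_singleton (a : A) : hp.toMeasure.real {a} = p a := by
  rw [measureReal_def, toMeasure, PMF.toMeasure_apply_singleton _ _ (measurableSet_singleton a),
    PMF.ofFintype_apply, ENNReal.toReal_ofReal (hp.1 a)]

lemma integral_toMeasure (f : A → ℝ) : ∫ a, f a ∂hp.toMeasure = ∑ a, p a * f a := by
  simp only [integral_fintype Integrable.of_finite, toMeasure_real_singleton, smul_eq_mul]

lemma measureReal_pi_toMeasure {ι : Type*} [Fintype ι] [DecidableEq ι] (P : (ι → A) → Prop)
    [DecidablePred P] :
    (Measure.pi fun _ : ι => hp.toMeasure).real {ω | P ω} =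
      ∑ ω, if P ω then ∏ i, p (ω i) else 0 := by
  have hsingleton (ω : ι → A) :
      (Measure.pi fun _ : ι => hp.toMeasure).real {ω} = ∏ i, p (ω i) := by
    simp only [measureReal_def, Measure.pi_singleton, ENNReal.toReal_prod,
      ← toMeasure_real_singleton hp]
  have hfilter : {ω | P ω} = ((univ.filter P : Finset (ι → A)) : Set (ι → A)) := by simp
  rw [hfilter, ← sum_measureReal_singleton, sum_filter]
  simp only [hsingleton]

end Measure

lemma sum_posPart_sub_le_one {q : A → ℝ} (hp : IsDist p) (hq : ∀ a, 0 ≤ q a) :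
    ∑ a, (p a - q a)⁺ ≤ 1 := by
  rw [← hp.2]
  exact sum_le_sum fun a _ => sup_le (sub_le_self _ (hq a)) (hp.1 a)

lemma joint_s1 {S : Type} [Fintype S] {ρ : S → ℝ} {π : S → A → ℝ} (hρ : IsDist ρ)
    (hπ : IsCondDist π) : IsDist fun x : S × A => ρ x.1 * π x.1 x.2 := by
  refine ⟨fun x => mul_nonneg (hρ.1 _) ((hπ _).1 _), ?_⟩
  simp only [Fintype.sum_prod_type, ← mul_sum, (hπ _).2, mul_one, hρ.2]

end IsDist

section PositivePart

variable {α : Type*}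

lemma mul_indicator_one_eq_posPart (u : α → ℝ) (a : α) :
    u a * {b | 0 < u b}.indicator 1 a = (u a)⁺ := by
  by_cases h : 0 < u a
  · simp [h, posPart_of_nonneg h.le]
  · simp [h, posPart_of_nonpos (not_lt.1 h)]

lemma mul_le_posPart {x t : ℝ} (ht₀ : 0 ≤ t) (ht₁ : t ≤ 1) : x * t ≤ x⁺ :=
  (mul_le_mul_of_nonneg_right (le_posPart x) ht₀).trans
    (mul_le_of_le_one_right (posPart_nonneg x) ht₁)

lemma half_sum_abs_sub_eq_sum_posPart [Fintype α] {p q : α → ℝ} (h : ∑ a, p a = ∑ a, q a) :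
    1 / 2 * ∑ a, |p a - q a| = ∑ a, (p a - q a)⁺ := by
  have hpos : ∑ a, ((p a - q a) + |p a - q a|) = 2 * ∑ a, (p a - q a)⁺ := by
    simp only [add_abs_eq_two_nsmul_posPart, nsmul_eq_mul, Nat.cast_ofNat, mul_sum]
  rw [sum_add_distrib, sum_sub_distrib, h, sub_self, zero_add] at hpos
  rw [hpos]
  ring

lemma indicator_one_mem_Icc (s : Set α) (a : α) :
    s.indicator (1 : α → ℝ) a ∈ Set.Icc 0 1 := by
  by_cases h : a ∈ s <;> simp [h]

end PositivePart

section Estimation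

variable {S A : Type} {ρ : S → ℝ} {π e : S → A → ℝ} {n : ℕ}

/-- The deviation of `f(s, a)` from its conditional mean under `a ∼ π(·|s)`. -/
noncomputable def labelDeviation [Fintype A] (π : S → A → ℝ) (f : S × A → ℝ) (x : S × A) : ℝ :=
  f x - ∑ a, π x.1 a * f (x.1, a)

/-- The amount by which `g(s)` falls short of its mean under `ρ`. The sign is chosen so that
indicators `g` detect inputs that are sampled too rarely. -/
noncomputable def inputDeficit [Fintype S] (ρ : S → ℝ) (g : S → ℝ) (s : S) : ℝ :=
  ∑ s', ρ s' * g s' - g s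

section SubGaussian

variable [Fintype S] [Fintype A] [MeasurableSpace S] [MeasurableSpace A]
  [MeasurableSingletonClass S] [MeasurableSingletonClass A]

lemma hasSubgaussianMGF_joint_of_forall {X : S × A → ℝ} {c : ℝ≥0} (hρ : IsDist ρ)
    (hπ : IsCondDist π) (hX : ∀ s, HasSubgaussianMGF (fun a => X (s, a)) c (hπ s).toMeasure) :
    HasSubgaussianMGF X c (hρ.joint_s1 hπ).toMeasure where
  integrable_exp_mul _ := Integrable.of_finite
  mgf_le t := calc
    mgf X (hρ.joint_s1 hπ).toMeasure t
        = ∑ s, ρ s * mgf (fun a => X (s, a)) (hπ s).toMeasure t := by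
      simp only [mgf, IsDist.integral_toMeasure, Fintype.sum_prod_type, mul_assoc, mul_sum]
    _ ≤ ∑ s, ρ s * Real.exp (c * t ^ 2 / 2) :=
      sum_le_sum fun s _ => mul_le_mul_of_nonneg_left ((hX s).mgf_le t) (hρ.1 s)
    _ = Real.exp (c * t ^ 2 / 2) := by rw [← sum_mul, hρ.2, one_mul]

lemma hasSubgaussianMGF_labelDeviation (hρ : IsDist ρ) (hπ : IsCondDist π) {f : S × A → ℝ}
    {a b : ℝ} (hf : ∀ x, f x ∈ Set.Icc a b) :
    HasSubgaussianMGF (labelDeviation π f) ((‖b - a‖₊ / 2) ^ 2) (hρ.joint_s1 hπ).toMeasure := by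
  refine hasSubgaussianMGF_joint_of_forall hρ hπ fun s => ?_
  have hoeffding := hasSubgaussianMGF_of_mem_Icc (μ := (hπ s).toMeasure)
    (X := fun a => f (s, a)) (measurable_of_finite _).aemeasurable (ae_of_all _ fun a => hf (s, a))
  simpa only [labelDeviation, IsDist.integral_toMeasure] using hoeffding

lemma hasSubgaussianMGF_inputDeficit (hρ : IsDist ρ) (hπ : IsCondDist π) {g : S → ℝ}
    {a b : ℝ} (hg : ∀ s, g s ∈ Set.Icc a b) :
    HasSubgaussianMGF (fun x => inputDeficit ρ g x.1) ((‖b - a‖₊ / 2) ^ 2)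
      (hρ.joint_s1 hπ).toMeasure := by
  have hmean : ∫ x, g x.1 ∂(hρ.joint_s1 hπ).toMeasure = ∑ s, ρ s * g s := by
    simp only [IsDist.integral_toMeasure, Fintype.sum_prod_type, ← sum_mul, ← mul_sum, (hπ _).2,
      mul_one]
  have hoeffding := (hasSubgaussianMGF_of_mem_Icc (μ := (hρ.joint_s1 hπ).toMeasure)
    (X := fun x => g x.1) (measurable_of_finite _).aemeasurable
    (ae_of_all _ fun x => hg x.1)).neg
  rw [hmean] at hoeffding
  exact hoeffding.congr (ae_of_all _ fun x => neg_sub _ _)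

end SubGaussian

lemma condTV_eq_sum_mul_sum_posPart [Fintype S] [Fintype A] (he : IsCondDist e)
    (hπ : IsCondDist π) : condTV ρ e π = ∑ s, ρ s * ∑ a, (e s a - π s a)⁺ := by
  simp only [condTV, half_sum_abs_sub_eq_sum_posPart ((he _).2.trans (hπ _).2.symm)]

section Counts

variable [DecidableEq S]

section Inputs

variable [Fintype S]

lemma sum_eq_sum_cntS_mul (D : Fin n → S × A) (g : S → ℝ) :
    ∑ i, g (D i).1 = ∑ s, cntS D s * g s := by
  simp only [← sum_fiberwise' univ (fun i => (D i).1) g, sum_const, nsmul_eq_mul, cntS]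

lemma sum_inputDeficit (D : Fin n → S × A) (g : S → ℝ) :
    ∑ i, inputDeficit ρ g (D i).1 = ∑ s, (n * ρ s - cntS D s) * g s := by
  simp only [inputDeficit, sum_sub_distrib, sum_const, card_univ, Fintype.card_fin, nsmul_eq_mul,
    sum_eq_sum_cntS_mul, sub_mul, mul_sum, mul_assoc]

lemma exists_sum_inputDeficit_eq_sum_posPart (D : Fin n → S × A) :
    ∃ C : Finset S, ∑ i, inputDeficit ρ ((C : Set S).indicator 1) (D i).1 =
      ∑ s, (n * ρ s - cntS D s)⁺ := by
  refine ⟨univ.filter fun s => 0 < n * ρ s - cntS D s, ?_⟩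
  simp only [sum_inputDeficit, coe_filter_univ,
    mul_indicator_one_eq_posPart (fun s => n * ρ s - cntS D s)]

end Inputs

variable [DecidableEq A]

lemma cntSA_le_cntS (D : Fin n → S × A) (s : S) (a : A) : cntSA D s a ≤ cntS D s :=
  card_le_card <| monotone_filter_right _ fun _ _ h => congrArg Prod.fst h

/-- `e` is a maximum likelihood estimate of the conditional label distribution from `D`; its values
at inputs that do not occur in `D` are arbitrary. -/
def IsMLE (e : S → A → ℝ) (D : Fin n → S × A) : Prop :=
  ∀ s a, 0 < cntS D s → e s a = (cntSA D s a : ℝ) / (cntS D s : ℝ)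

lemma IsMLE.cntS_mul_eq {D : Fin n → S × A} (he : IsMLE e D) (s : S) (a : A) :
    cntS D s * e s a = cntSA D s a := by
  rcases Nat.eq_zero_or_pos (cntS D s) with hs | hs
  · have hsa : cntSA D s a = 0 := Nat.le_zero.1 (hs ▸ cntSA_le_cntS D s a)
    simp [hs, hsa]
  · rw [he s a hs, mul_div_cancel₀ _ (Nat.cast_ne_zero.2 hs.ne')]

variable [Fintype S] [Fintype A]

lemma sum_eq_sum_cntSA_mul (D : Fin n → S × A) (f : S × A → ℝ) :
    ∑ i, f (D i) = ∑ s, ∑ a, cntSA D s a * f (s, a) := by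
  simp only [← sum_fiberwise' univ D f, Fintype.sum_prod_type, sum_const, nsmul_eq_mul, cntSA]

lemma sum_labelDeviation (D : Fin n → S × A) (f : S × A → ℝ) :
    ∑ i, labelDeviation π f (D i) =
      ∑ s, ∑ a, (cntSA D s a - cntS D s * π s a) * f (s, a) := by
  simp only [labelDeviation, sum_sub_distrib, sum_eq_sum_cntSA_mul,
    sum_eq_sum_cntS_mul D fun s => ∑ a, π s a * f (s, a), sub_mul, mul_sum, mul_assoc]

namespace IsMLE

variable {D : Fin n → S × A}

lemma exists_sum_labelDeviation_eq_sum_posPart (he : IsMLE e D) (π : S → A → ℝ) :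
    ∃ B : Finset (S × A), ∑ i, labelDeviation π ((B : Set (S × A)).indicator 1) (D i) =
      ∑ s, cntS D s * ∑ a, (e s a - π s a)⁺ := by
  refine ⟨univ.filter fun x => 0 < e x.1 x.2 - π x.1 x.2, ?_⟩
  simp only [sum_labelDeviation, ← he.cntS_mul_eq, ← mul_sub, mul_assoc, coe_filter_univ, mul_sum,
    mul_indicator_one_eq_posPart (fun x : S × A => e x.1 x.2 - π x.1 x.2) (_, _)]

lemma exists_mul_condTV_le (he : IsMLE e D) (he' : IsCondDist e) (hπ : IsCondDist π) (ρ : S → ℝ) :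
    ∃ (B : Finset (S × A)) (C : Finset S),
      n * condTV ρ e π ≤ ∑ i, labelDeviation π ((B : Set (S × A)).indicator 1) (D i) +
        ∑ i, inputDeficit ρ ((C : Set S).indicator 1) (D i).1 := by
  obtain ⟨B, hB⟩ := he.exists_sum_labelDeviation_eq_sum_posPart π
  obtain ⟨C, hC⟩ := exists_sum_inputDeficit_eq_sum_posPart (ρ := ρ) D
  refine ⟨B, C, ?_⟩
  rw [hB, hC, condTV_eq_sum_mul_sum_posPart he' hπ, mul_sum, ← sum_add_distrib]
  refine sum_le_sum fun s _ => ?_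
  have hdeficit := mul_le_posPart (x := n * ρ s - cntS D s)
    (sum_nonneg fun a _ => posPart_nonneg (e s a - π s a))
    ((he' s).sum_posPart_sub_le_one (hπ s).1)
  linarith

end IsMLE

end Counts

section Concentration

variable [Fintype S] [Fintype A]

section UnionBound

variable [MeasurableSpace S] [MeasurableSpace A] [MeasurableSingletonClass S]
  [MeasurableSingletonClass A] (hρ : IsDist ρ) (hπ : IsCondDist π)

lemma measureReal_exists_le_sum_labelDeviation_le {ε : ℝ} (hε : 0 ≤ ε) :
    (Measure.pi fun _ : Fin n => (hρ.joint_s1 hπ).toMeasure).real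
        {D | ∃ B : Finset (S × A),
          n * ε ≤ ∑ i, labelDeviation π ((B : Set (S × A)).indicator 1) (D i)} ≤
      2 ^ (Fintype.card S * Fintype.card A) * Real.exp (-(2 * n * ε ^ 2)) := by
  have htail := measureReal_pi_exists_card_mul_le_sum_le (ι := Fin n) (fun B : Finset (S × A) =>
    hasSubgaussianMGF_labelDeviation hρ hπ (indicator_one_mem_Icc (B : Set (S × A)))) hε
  rw [div_two_mul_sq_half_nnnorm_sub] at htail
  simpa only [Fintype.card_fin, Fintype.card_finset, Fintype.card_prod, Nat.cast_pow,
    Nat.cast_ofNat, sub_zero, one_pow, div_one, ← mul_assoc] using htail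

lemma measureReal_exists_le_sum_inputDeficit_le {ε : ℝ} (hε : 0 ≤ ε) :
    (Measure.pi fun _ : Fin n => (hρ.joint_s1 hπ).toMeasure).real
        {D | ∃ C : Finset S, n * ε ≤ ∑ i, inputDeficit ρ ((C : Set S).indicator 1) (D i).1} ≤
      2 ^ Fintype.card S * Real.exp (-(2 * n * ε ^ 2)) := by
  have htail := measureReal_pi_exists_card_mul_le_sum_le (ι := Fin n) (fun C : Finset S =>
    hasSubgaussianMGF_inputDeficit hρ hπ (indicator_one_mem_Icc (C : Set S))) hε
  rw [div_two_mul_sq_half_nnnorm_sub] at htail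
  simpa only [Fintype.card_fin, Fintype.card_finset, Nat.cast_pow, Nat.cast_ofNat, sub_zero,
    one_pow, div_one, ← mul_assoc] using htail

variable [DecidableEq S] [DecidableEq A] {est : (Fin n → S × A) → S → A → ℝ} {ε₁ ε₂ : ℝ}

lemma measureReal_add_lt_condTV_le (hest : ∀ D, IsCondDist (est D)) (hmle : ∀ D, IsMLE (est D) D)
    (hε₁ : 0 ≤ ε₁) (hε₂ : 0 ≤ ε₂) :
    (Measure.pi fun _ : Fin n => (hρ.joint_s1 hπ).toMeasure).real
        {D | ε₁ + ε₂ < condTV ρ (est D) π} ≤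
      2 ^ (Fintype.card S * Fintype.card A) * Real.exp (-(2 * n * ε₁ ^ 2)) +
        2 ^ Fintype.card S * Real.exp (-(2 * n * ε₂ ^ 2)) := by
  refine (measureReal_mono ?_).trans <| (measureReal_union_le _ _).trans <|
    add_le_add (measureReal_exists_le_sum_labelDeviation_le hρ hπ hε₁)
      (measureReal_exists_le_sum_inputDeficit_le hρ hπ hε₂)
  intro D hD
  obtain ⟨B, C, hBC⟩ := (hmle D).exists_mul_condTV_le (hest D) hπ ρ
  have hlarge : (n : ℝ) * ε₁ + n * ε₂ ≤ _ := calc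
    n * ε₁ + n * ε₂ = n * (ε₁ + ε₂) := (mul_add ..).symm
    _ ≤ n * condTV ρ (est D) π := mul_le_mul_of_nonneg_left (le_of_lt hD) n.cast_nonneg
    _ ≤ _ := hBC
  exact (le_or_le_of_add_le_add hlarge).imp (⟨B, ·⟩) (⟨C, ·⟩)

end UnionBound

theorem one_sub_le_sum_wt_of_log_le [DecidableEq S] [DecidableEq A] (hρ : IsDist ρ)
    (hπ : IsCondDist π) {est : (Fin n → S × A) → S → A → ℝ} (hest : ∀ D, IsCondDist (est D))
    (hmle : ∀ D, IsMLE (est D) D) {δ ε₁ ε₂ : ℝ} (hδ : 0 < δ) (hε₁ : 0 ≤ ε₁) (hε₂ : 0 ≤ ε₂)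
    (hlog₁ : Real.log (2 ^ (Fintype.card S * Fintype.card A) / (δ / 2)) ≤ 2 * n * ε₁ ^ 2)
    (hlog₂ : Real.log (2 ^ Fintype.card S / (δ / 2)) ≤ 2 * n * ε₂ ^ 2) :
    1 - δ ≤ ∑ D : Fin n → S × A, if condTV ρ (est D) π ≤ ε₁ + ε₂ then wt ρ π D else 0 := by
  let _ : MeasurableSpace S := ⊤
  let _ : MeasurableSpace A := ⊤
  have hbad := measureReal_add_lt_condTV_le hρ hπ hest hmle hε₁ hε₂
  have htail₁ := mul_exp_neg_le_of_log_div_le (by positivity) (half_pos hδ) hlog₁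
  have htail₂ := mul_exp_neg_le_of_log_div_le (by positivity) (half_pos hδ) hlog₂
  have hcompl : {D : Fin n → S × A | ε₁ + ε₂ < condTV ρ (est D) π} =
      {D | condTV ρ (est D) π ≤ ε₁ + ε₂}ᶜ := by ext; simp
  rw [hcompl, probReal_compl_eq_one_sub (Set.toFinite _).measurableSet,
    (hρ.joint_s1 hπ).measureReal_pi_toMeasure] at hbad
  simp only [wt]
  linarith

end Concentration

end Estimation

/-- high-probability upper bound for the maximum likelihood estimator. -/
theorem stmt_1 (S A : Type) [Fintype S] [Fintype A] [Nonempty S] [Nonempty A]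
    [DecidableEq S] [DecidableEq A]
    (ρ : S → ℝ) (πs : S → A → ℝ) (hρ : IsDist ρ) (hπs : IsCondDist πs)
    (n : ℕ) (hn : 0 < n)
    (est : (Fin n → S × A) → S → A → ℝ)
    (hest : ∀ D, IsCondDist (est D))
    (hmle : ∀ D s a, 0 < cntS D s → est D s a = (cntSA D s a : ℝ) / (cntS D s : ℝ))
    (δ : ℝ) (hδ0 : 0 < δ) (hδ1 : δ < 1) :
    1 - δ ≤
      ∑ D : Fin n → S × A,
        if condTV ρ (est D) πs ≤
            Real.sqrt ((Fintype.card S : ℝ) *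
                ((Fintype.card A : ℝ) * Real.log 2 +
                  Real.log (((Fintype.card S : ℝ) + 1) / δ)) / (2 * n)) +
            Real.sqrt (2 * ((Fintype.card S : ℝ) * Real.log 2 +
                  Real.log (((Fintype.card S : ℝ) + 1) / δ)) / n)
          then wt ρ πs D else 0 := by
  have hn' : (n : ℝ) ≠ 0 := Nat.cast_ne_zero.2 hn.ne'
  have hcard : (1 : ℝ) ≤ Fintype.card S := Nat.one_le_cast.2 Fintype.card_pos
  have hL : 0 ≤ Real.log ((Fintype.card S + 1) / δ) :=
    Real.log_nonneg ((one_le_div₀ hδ0).2 (by linarith))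
  refine one_sub_le_sum_wt_of_log_le hρ hπs hest hmle hδ0 (Real.sqrt_nonneg _) (Real.sqrt_nonneg _)
    ((log_two_pow_div_half_le _ hδ0 hcard).trans ?_)
    ((log_two_pow_div_half_le _ hδ0 hcard).trans ?_)
  · rw [Real.sq_sqrt (by positivity), mul_div_cancel₀ _ (by positivity), Nat.cast_mul, mul_add,
      mul_assoc]
    gcongr
    exact le_mul_of_one_le_left hL hcard
  · rw [Real.sq_sqrt (by positivity)]
    calc (Fintype.card S : ℝ) * Real.log 2 + Real.log ((Fintype.card S + 1) / δ)
        ≤ 4 * (Fintype.card S * Real.log 2 + Real.log ((Fintype.card S + 1) / δ)) :=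
          le_mul_of_one_le_left (by positivity) (by norm_num)
      _ = 2 * n * (2 * (Fintype.card S * Real.log 2 +
            Real.log ((Fintype.card S + 1) / δ)) / n) := by field_simp; norm_num
end

section
/- There is a universal constant C > 0 with the following property. Let S and A be nonempty finite sets with |S| ≥ 2, ρ ∈ Δ(S), π* ∈ Δ(A|S), and let D = ((s_1,a_1),…,(s_n,a_n)) be n i.i.d. samples from ρ×π*. Let π̂ ∈ Δ(A|S) be any conditional distribution satisfying π̂(a_i|s_i) = π*(a_i|s_i) for every i ∈ {1,…,n}. Then for every δ ∈ (0, min(1, (|S|+2)/10)), with probability at least 1 − δ, TV(π̂ ‖ π* | ρ) ≤ C · ( |S|·(|A| + √(|A|·log((|S|+2)/δ))) / n ) · log( |S|·(|S|+2)/δ ). -/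
open Finset

open scoped Classical

/-!
A learner that matches the teacher on every sampled pair can differ from it only on unseen pairs,
and two distributions on `A` that agree off a set `U` are within total variation `q(U)` of each
other. Hence the conditional total variation is at most the missing mass: the `ρ × π*`-probability
of the pairs absent from the sample. A fixed set of mass more than `B` is missed by all `n` samples
with probability at most `exp (-n B)`, and a union bound over all `2 ^ (|S| |A|)` candidates for the
set of unseen pairs bounds the missing mass by `(|S| |A| log 2 + log (1 / δ)) / n` with probability
at least `1 - δ`.
-/

section IIDSample

variable {X : Type*} [Fintype X] {n : ℕ}

/-- The probability of the event `E` when the entries of the sample `Fin n → X` are drawn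
independently from the weights `q`. It is written as a sum of indicators, the form in which
`wt` enters the probabilities of `stmt_10`. -/
def iidProb (q : X → ℝ) (E : (Fin n → X) → Prop) [DecidablePred E] : ℝ :=
  ∑ D, if E D then ∏ i, q (D i) else 0

/-- The points that do not occur in the sample `D`. -/
noncomputable def unseen (D : Fin n → X) : Finset X := {x | x ∉ Set.range D}

/-- The total weight of the points that do not occur in the sample `D`. -/
noncomputable def missingMass (q : X → ℝ) (D : Fin n → X) : ℝ := ∑ x ∈ unseen D, q x

lemma notMem_unseen {D : Fin n → X} {x : X} : x ∉ unseen D ↔ ∃ i, D i = x := by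
  simp [unseen]

lemma iidProb_forall (q : X → ℝ) (p : X → Prop) [DecidablePred p] :
    iidProb q (fun D : Fin n → X => ∀ i, p (D i)) = (∑ x with p x, q x) ^ n := by
  simp only [iidProb, sum_filter, Fintype.sum_pow, Fintype.prod_ite_zero]
  congr!

lemma iidProb_add_iidProb_not {q : X → ℝ} (hq : ∑ x, q x = 1) (E : (Fin n → X) → Prop)
    [DecidablePred E] : iidProb q E + iidProb q (fun D => ¬ E D) = 1 := by
  calc iidProb q E + iidProb q (fun D => ¬ E D)
      = ∑ D : Fin n → X, ∏ i, q (D i) := by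
        simp only [iidProb, ← sum_filter, sum_filter_add_sum_filter_not]
    _ = 1 := by rw [← Fintype.sum_pow, hq, one_pow]

lemma iidProb_mono {q : X → ℝ} (hq : ∀ x, 0 ≤ q x) {E F : (Fin n → X) → Prop}
    [DecidablePred E] [DecidablePred F] (hEF : ∀ D, E D → F D) : iidProb q E ≤ iidProb q F := by
  simp only [iidProb, ← sum_filter]
  exact sum_le_sum_of_subset_of_nonneg (monotone_filter_right _ fun D _ => hEF D)
    fun D _ _ => prod_nonneg fun i _ => hq (D i)

lemma iidProb_exists_mem_le_sum {q : X → ℝ} (hq : ∀ x, 0 ≤ q x) {κ : Type*} (I : Finset κ)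
    (E : κ → (Fin n → X) → Prop) [∀ k, DecidablePred (E k)] :
    iidProb q (fun D => ∃ k ∈ I, E k D) ≤ ∑ k ∈ I, iidProb q (E k) := by
  have hw (D : Fin n → X) : 0 ≤ ∏ i, q (D i) := prod_nonneg fun i _ => hq (D i)
  have hterm (k : κ) (D : Fin n → X) : 0 ≤ if E k D then ∏ i, q (D i) else 0 :=
    ite_nonneg (hw D) le_rfl
  simp only [iidProb]
  rw [sum_comm]
  refine sum_le_sum fun D _ => ?_
  split_ifs with hD
  · obtain ⟨k, hk, hkD⟩ := hD
    simpa only [if_pos hkD] using single_le_sum (fun j _ => hterm j D) hk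
  · exact sum_nonneg fun k _ => hterm k D

lemma iidProb_forall_notMem_le_exp {q : X → ℝ} (hq : q ∈ stdSimplex ℝ X) (U : Finset X) :
    iidProb q (fun D : Fin n → X => ∀ i, D i ∉ U) ≤ Real.exp (-(n * ∑ x ∈ U, q x)) := by
  have hcompl : ∑ x with x ∉ U, q x = 1 - ∑ x ∈ U, q x := by
    rw [← hq.2, ← sum_add_sum_compl U, add_sub_cancel_left, ← compl_filter, filter_univ_mem]
  calc iidProb q (fun D : Fin n → X => ∀ i, D i ∉ U)
      = (∑ x with x ∉ U, q x) ^ n := iidProb_forall q (· ∉ U)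
    _ ≤ Real.exp (-∑ x ∈ U, q x) ^ n := by
        gcongr
        · exact sum_nonneg fun x _ => hq.1 x
        · exact hcompl.trans_le (Real.one_sub_le_exp_neg _)
    _ = Real.exp (-(n * ∑ x ∈ U, q x)) := by rw [← Real.exp_nat_mul, mul_neg]

lemma iidProb_lt_missingMass_le {q : X → ℝ} (hq : q ∈ stdSimplex ℝ X) (n : ℕ) (B : ℝ) :
    iidProb q (fun D : Fin n → X => B < missingMass q D) ≤
      2 ^ Fintype.card X * Real.exp (-(n * B)) := by
  let heavy : Finset (Finset X) := {U | B < ∑ x ∈ U, q x}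
  have hmissed (D : Fin n → X) (hD : B < missingMass q D) : ∃ U ∈ heavy, ∀ i, D i ∉ U :=
    ⟨unseen D, mem_filter.2 ⟨mem_univ _, hD⟩, fun i => notMem_unseen.2 ⟨i, rfl⟩⟩
  calc iidProb q (fun D : Fin n → X => B < missingMass q D)
      ≤ iidProb q (fun D : Fin n → X => ∃ U ∈ heavy, ∀ i, D i ∉ U) := iidProb_mono hq.1 hmissed
    _ ≤ ∑ U ∈ heavy, iidProb q (fun D : Fin n → X => ∀ i, D i ∉ U) :=
        iidProb_exists_mem_le_sum hq.1 heavy _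
    _ ≤ ∑ _U ∈ heavy, Real.exp (-(n * B)) := by
        refine sum_le_sum fun U hU => (iidProb_forall_notMem_le_exp hq U).trans ?_
        gcongr
        exact (mem_filter.1 hU).2.le
    _ = #heavy * Real.exp (-(n * B)) := by rw [sum_const, nsmul_eq_mul]
    _ ≤ 2 ^ Fintype.card X * Real.exp (-(n * B)) := by
        gcongr
        exact_mod_cast heavy.card_le_univ.trans_eq Fintype.card_finset

lemma one_sub_le_iidProb_missingMass_le {q : X → ℝ} (hq : q ∈ stdSimplex ℝ X) (hn : 0 < n)
    {δ : ℝ} (hδ : 0 < δ) :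
    1 - δ ≤ iidProb q (fun D : Fin n → X =>
      missingMass q D ≤ (Fintype.card X * Real.log 2 + Real.log (1 / δ)) / n) := by
  set B := (Fintype.card X * Real.log 2 + Real.log (1 / δ)) / n with hB
  have htail : (2 : ℝ) ^ Fintype.card X * Real.exp (-(n * B)) = δ := by
    have hn0 : (n : ℝ) ≠ 0 := by positivity
    have hexp : Real.exp (n * B) = 2 ^ Fintype.card X / δ := by
      rw [hB, mul_div_cancel₀ _ hn0, Real.exp_add, Real.exp_nat_mul, Real.exp_log two_pos,
        Real.exp_log (by positivity), mul_one_div]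
    rw [Real.exp_neg, hexp]
    field_simp
  have hsplit := iidProb_add_iidProb_not hq.2 fun D : Fin n → X => missingMass q D ≤ B
  simp only [not_le] at hsplit
  linarith [iidProb_lt_missingMass_le hq n B]

end IIDSample

lemma half_sum_abs_sub_le {A : Type*} [Fintype A] {p q : A → ℝ} (hp : p ∈ stdSimplex ℝ A)
    (hq : q ∈ stdSimplex ℝ A) {U : Finset A} (hpq : ∀ a ∉ U, p a = q a) :
    1 / 2 * ∑ a, |p a - q a| ≤ ∑ a ∈ U, q a := by
  have hmass : ∑ a ∈ U, p a = ∑ a ∈ U, q a := by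
    have hcompl : ∑ a ∈ Uᶜ, p a = ∑ a ∈ Uᶜ, q a :=
      sum_congr rfl fun a ha => hpq a (mem_compl.1 ha)
    linarith [sum_add_sum_compl U p, sum_add_sum_compl U q, hp.2, hq.2]
  calc 1 / 2 * ∑ a, |p a - q a|
      = 1 / 2 * ∑ a ∈ U, |p a - q a| := by
        rw [sum_subset U.subset_univ fun a _ ha => by rw [hpq a ha, sub_self, abs_zero]]
    _ ≤ 1 / 2 * ∑ a ∈ U, (p a + q a) := by
        gcongr with a
        exact abs_sub_le_iff.2 ⟨by linarith [hq.1 a], by linarith [hp.1 a]⟩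
    _ = ∑ a ∈ U, q a := by rw [sum_add_distrib, hmass]; ring

section Joint

variable {S A : Type} [Fintype S] [Fintype A] {ρ : S → ℝ}

/-- The law `ρ × π` of a single sample: `wt ρ π D` is the product of its values along `D`. -/
def joint (ρ : S → ℝ) (π : S → A → ℝ) (x : S × A) : ℝ := ρ x.1 * π x.1 x.2

lemma joint_mem_stdSimplex {π : S → A → ℝ} (hρ : IsDist ρ) (hπ : IsCondDist π) :
    joint ρ π ∈ stdSimplex ℝ (S × A) := by
  refine ⟨fun x => mul_nonneg (hρ.1 _) ((hπ _).1 _), ?_⟩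
  simp only [joint, Fintype.sum_prod_type, ← mul_sum, (hπ _).2, mul_one, hρ.2]

lemma condTV_le_sum_joint {π π' : S → A → ℝ} (hρ : ∀ s, 0 ≤ ρ s) (hπ : IsCondDist π)
    (hπ' : IsCondDist π') {U : Finset (S × A)} (h : ∀ x ∉ U, π x.1 x.2 = π' x.1 x.2) :
    condTV ρ π π' ≤ ∑ x ∈ U, joint ρ π' x := by
  calc condTV ρ π π'
      ≤ ∑ s, ρ s * ∑ a with (s, a) ∈ U, π' s a := by
        unfold condTV
        gcongr with s
        · exact hρ s
        · exact half_sum_abs_sub_le (hπ s) (hπ' s) fun a ha => h (s, a) (by simpa using ha)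
    _ = ∑ x ∈ U, joint ρ π' x := by
        rw [← Fintype.sum_ite_mem U, Fintype.sum_prod_type]
        simp only [joint, mul_sum, sum_filter, mul_ite, mul_zero]

lemma condTV_le_missingMass {n : ℕ} {π π' : S → A → ℝ} (hρ : ∀ s, 0 ≤ ρ s) (hπ : IsCondDist π)
    (hπ' : IsCondDist π') {D : Fin n → S × A} (h : ∀ i, π (D i).1 (D i).2 = π' (D i).1 (D i).2) :
    condTV ρ π π' ≤ missingMass (joint ρ π') D := by
  refine condTV_le_sum_joint hρ hπ hπ' fun x hx => ?_
  obtain ⟨i, rfl⟩ := notMem_unseen.1 hx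
  exact h i

end Joint

lemma mul_log_two_add_log_one_div_div_le {s a r δ : ℝ} (hs : 1 ≤ s) (ha : 1 ≤ a) (hr : 0 ≤ r)
    (hδ : 0 < δ) (hδ1 : δ ≤ 1) (n : ℕ) :
    (s * a * Real.log 2 + Real.log (1 / δ)) / n ≤
      s * (a + r) / n * Real.log (s * (s + 2) / δ) := by
  have hlogδ : 0 ≤ Real.log (1 / δ) := Real.log_nonneg (one_le_one_div hδ hδ1)
  have hlog : Real.log 2 + Real.log (1 / δ) ≤ Real.log (s * (s + 2) / δ) := by
    rw [← Real.log_mul two_ne_zero (by positivity), mul_one_div]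
    gcongr
    nlinarith
  have hnum : s * a * Real.log 2 + Real.log (1 / δ) ≤
      s * (a + r) * Real.log (s * (s + 2) / δ) := by
    calc s * a * Real.log 2 + Real.log (1 / δ)
        ≤ s * a * Real.log 2 + s * a * Real.log (1 / δ) := by
          gcongr
          exact le_mul_of_one_le_left hlogδ (one_le_mul_of_one_le_of_one_le hs ha)
      _ = s * a * (Real.log 2 + Real.log (1 / δ)) := (mul_add _ _ _).symm
      _ ≤ s * (a + r) * Real.log (s * (s + 2) / δ) := by
          gcongr
          linarith
  rw [div_mul_eq_mul_div]
  gcongr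

theorem stmt_10_general {S A : Type} [Fintype S] [Fintype A] {ρ : S → ℝ} {πs : S → A → ℝ}
    (hρ : IsDist ρ) (hπs : IsCondDist πs) {n : ℕ} (hn : 0 < n)
    {est : (Fin n → S × A) → S → A → ℝ} (hest : ∀ D, IsCondDist (est D))
    (hmatch : ∀ D (i : Fin n), est D (D i).1 (D i).2 = πs (D i).1 (D i).2)
    {δ : ℝ} (hδ : 0 < δ) :
    1 - δ ≤
      ∑ D : Fin n → S × A,
        if condTV ρ (est D) πs ≤
            ((Fintype.card S : ℝ) * Fintype.card A * Real.log 2 + Real.log (1 / δ)) / n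
          then wt ρ πs D else 0 := by
  have hjoint := joint_mem_stdSimplex hρ hπs
  have hmissing := one_sub_le_iidProb_missingMass_le hjoint hn hδ
  rw [Fintype.card_prod, Nat.cast_mul] at hmissing
  exact hmissing.trans <| iidProb_mono hjoint.1 fun D =>
    (condTV_le_missingMass hρ.1 (hest D) hπs (hmatch D)).trans

/-- high-probability upper bound for any empirical squared error
logit loss minimizer (a learner matching the teacher probability on every
sampled pair), in the case `|S| ≥ 2`. -/
theorem stmt_10 :
    ∃ C : ℝ, 0 < C ∧
      ∀ (S A : Type) [Fintype S] [Fintype A] [Nonempty A],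
        2 ≤ Fintype.card S →
        ∀ (ρ : S → ℝ) (πs : S → A → ℝ), IsDist ρ → IsCondDist πs →
        ∀ (n : ℕ), 0 < n →
        ∀ (est : (Fin n → S × A) → S → A → ℝ),
          (∀ D, IsCondDist (est D)) →
          (∀ D (i : Fin n), est D (D i).1 (D i).2 = πs (D i).1 (D i).2) →
          ∀ δ : ℝ, 0 < δ → δ < min 1 (((Fintype.card S : ℝ) + 2) / 10) →
            1 - δ ≤
              ∑ D : Fin n → S × A,
                if condTV ρ (est D) πs ≤
                    C * ((Fintype.card S : ℝ) *
                        ((Fintype.card A : ℝ) +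
                          Real.sqrt ((Fintype.card A : ℝ) *
                            Real.log (((Fintype.card S : ℝ) + 2) / δ))) / n) *
                      Real.log ((Fintype.card S : ℝ) *
                        ((Fintype.card S : ℝ) + 2) / δ)
                  then wt ρ πs D else 0 := by
  refine ⟨1, one_pos, fun S A _ _ _ hS ρ πs hρ hπs n hn est hest hmatch δ hδ hδ' =>
    (stmt_10_general hρ hπs hn hest hmatch hδ).trans <|
      iidProb_mono (joint_mem_stdSimplex hρ hπs).1 fun D hD => hD.trans ?_⟩
  rw [one_mul]
  exact mul_log_two_add_log_one_div_div_le (by exact_mod_cast one_le_two.trans hS)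
    (by exact_mod_cast Fintype.card_pos (α := A)) (Real.sqrt_nonneg _) hδ
    (hδ'.le.trans (min_le_left _ _)) n
end
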